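/- Let q ∈ ℂ with 0 < |q| < 1 and let n ∈ ℤ. Then the function t ↦ (t − q^n) · g^{(0,1)}(t,q) / t tends to g^{(0,0)}(q^n, q) as t → q^n with t ∉ q^ℤ ∪ {0}; equivalently, g^{(0,1)}(t,q) has a simple pole at t = q^n with residue of g^{(0,1)}(t,q) dt/(2πit) equal to g^{(0,0)}(q^n,q). -/

import Mathlib

open Finset Filter

/-- Finite q-Pochhammer symbol `(x;q)_k = ∏_{j=0}^{k-1} (1 - x q^j)`. -/
noncomputable def qPoch (x q : ℂ) (k : ℕ) : ℂ := ∏ j ∈ Finset.range k, (1 - x * q ^ j)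

/-- Infinite q-Pochhammer symbol `(x;q)_∞ = ∏_{j=0}^{∞} (1 - x q^j)`. -/
noncomputable def qPochInf (x q : ℂ) : ℂ := ∏' j : ℕ, (1 - x * q ^ j)

/-- The Jacobi theta function `θ(t;q) = Σ_{k∈ℤ} (−1)^k q^{k(k+1)/2} t^k`. -/
noncomputable def jtheta (t q : ℂ) : ℂ :=
  ∑' k : ℤ, (-1 : ℂ) ^ k * q ^ (k * (k + 1) / 2) * t ^ k

/-- The derivative `θ'(t;q) = Σ_{k∈ℤ} (−1)^k k q^{k(k+1)/2} t^k` (with respect to t d/dt). -/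
noncomputable def jthetaD (t q : ℂ) : ℂ :=
  ∑' k : ℤ, (-1 : ℂ) ^ k * (k : ℂ) * q ^ (k * (k + 1) / 2) * t ^ k

/-- The Eisenstein-type series `E₁(q) = 1 − 4 Σ_{j=1}^∞ q^j/(1−q^j)`. -/
noncomputable def E1 (q : ℂ) : ℂ := 1 - 4 * ∑' j : ℕ, q ^ (j + 1) / (1 - q ^ (j + 1))

/-- The Appell-Lerch sum
`AL(t,λ,q) = θ(λ;q)⁻¹ Σ_{ℓ∈ℤ} (−1)^ℓ q^{ℓ(ℓ+1)/2} λ^ℓ / (1 − λ t q^ℓ)`. -/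
noncomputable def AL (t lam q : ℂ) : ℂ :=
  (jtheta lam q)⁻¹ *
    ∑' k : ℤ, (-1 : ℂ) ^ k * q ^ (k * (k + 1) / 2) * lam ^ k / (1 - lam * t * q ^ k)

/-- The solution `g^{(0,0)}(t,q) = Σ_{k≥0} (−1)^k q^{k(k+1)/2} (q;q)_k^{−2} t^{−1−k}`. -/
noncomputable def g00 (t q : ℂ) : ℂ :=
  ∑' k : ℕ, (-1 : ℂ) ^ k * q ^ (k * (k + 1) / 2) / (qPoch q q k) ^ 2 * t ^ (-1 - (k : ℤ))

/-- The solution `g^{(0,1)}(t,q)`. -/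
noncomputable def g01 (t q : ℂ) : ℂ :=
  ∑' k : ℕ,
    (E1 q / 2 - 1 / 2 - jthetaD t⁻¹ q / jtheta t⁻¹ q +
        ∑ j ∈ Finset.range k, (1 + q ^ (j + 1)) / (1 - q ^ (j + 1))) *
      ((-1 : ℂ) ^ k * q ^ (k * (k + 1) / 2) / (qPoch q q k) ^ 2 * t ^ (-1 - (k : ℤ)))

/-!
Since `g^{(0,1)} = (const - θ'(t⁻¹) / θ(t⁻¹)) g^{(0,0)} + (a series converging on ℂ ∖ {0})`, all
poles come from `θ' / θ`. The Jacobi triple product `θ(s) = (q;q)_∞ (sq;q)_∞ (s⁻¹;q)_∞`, obtained as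
a limit of its finite form, shows that `θ` has a simple zero at `s = 1`, and the quasi-periodicity
`θ(s) = (-1)^n q^{n(n+1)/2} s^n θ(q^n s)` carries it to every `q^n`. As `θ' = s dθ/ds`, the quotient
`θ'(t⁻¹) / θ(t⁻¹)` is `-t` times the logarithmic derivative of `t ↦ θ(t⁻¹)`, which has residue `1`
at the simple zero `q^n`.
-/

open Topology

section LaurentSeries

variable {ι : Type*} {a : ι → ℂ} {e : ι → ℤ}

lemma zpow_le_zpow_add_zpow {K : Type*} [Field K] [LinearOrder K] [IsStrictOrderedRing K]
    {r x R : K} (hr : 0 < r) (hrx : r ≤ x) (hxR : x ≤ R) (k : ℤ) :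
    x ^ k ≤ r ^ k + R ^ k := by
  have hx : 0 < x := hr.trans_le hrx
  have hR : 0 < R := hx.trans_le hxR
  rcases le_total 0 k with hk | hk
  · exact (zpow_le_zpow_left₀ hk hx.le hxR).trans (le_add_of_nonneg_left (zpow_pos hr k).le)
  · refine le_trans ?_ (le_add_of_nonneg_right (zpow_pos hR k).le)
    rw [← inv_inv x, ← inv_inv r, inv_zpow', inv_zpow' r⁻¹]
    exact zpow_le_zpow_left₀ (neg_nonneg.2 hk) (inv_pos.2 hx).le (inv_anti₀ hr hrx)

lemma exists_isOpen_summable_norm_mul_zpow_le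
    (ha : ∀ r : ℝ, 0 < r → Summable fun i => ‖a i‖ * r ^ e i) {z : ℂ} (hz : z ≠ 0) :
    ∃ U : Set ℂ, IsOpen U ∧ z ∈ U ∧ (∀ w ∈ U, w ≠ 0) ∧
      ∃ u : ι → ℝ, Summable u ∧ ∀ i, ∀ w ∈ U, ‖a i * w ^ e i‖ ≤ u i := by
  have hz' : 0 < ‖z‖ := norm_pos_iff.2 hz
  have hlow : 0 < ‖z‖ / 2 := half_pos hz'
  have hbounds : ∀ w ∈ Metric.ball z (‖z‖ / 2), ‖z‖ / 2 ≤ ‖w‖ ∧ ‖w‖ ≤ 2 * ‖z‖ := by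
    intro w hw
    have hdist : ‖w - z‖ < ‖z‖ / 2 := by simpa [dist_eq_norm] using hw
    have hzw := norm_sub_norm_le z w
    have hwz := norm_sub_norm_le w z
    rw [norm_sub_rev] at hzw
    constructor <;> linarith
  refine ⟨Metric.ball z (‖z‖ / 2), Metric.isOpen_ball, Metric.mem_ball_self hlow,
    fun w hw => norm_pos_iff.1 (hlow.trans_le (hbounds w hw).1), _,
    (ha (‖z‖ / 2) hlow).add (ha (2 * ‖z‖) (by positivity)), fun i w hw => ?_⟩
  rw [norm_mul, norm_zpow, ← mul_add]
  gcongr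
  exact zpow_le_zpow_add_zpow hlow (hbounds w hw).1 (hbounds w hw).2 _

lemma differentiableAt_tsum_mul_zpow
    (ha : ∀ r : ℝ, 0 < r → Summable fun i => ‖a i‖ * r ^ e i) {z : ℂ} (hz : z ≠ 0) :
    DifferentiableAt ℂ (fun w => ∑' i, a i * w ^ e i) z := by
  obtain ⟨U, hU, hzU, hU0, u, hu, hle⟩ := exists_isOpen_summable_norm_mul_zpow_le ha hz
  refine (Complex.differentiableOn_tsum_of_summable_norm hu (fun i w hw => ?_) hU
    hle).differentiableAt (hU.mem_nhds hzU)
  exact ((differentiableAt_zpow.2 (Or.inl (hU0 w hw))).const_mul _).differentiableWithinAt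

lemma hasSum_deriv_tsum_mul_zpow
    (ha : ∀ r : ℝ, 0 < r → Summable fun i => ‖a i‖ * r ^ e i) {z : ℂ} (hz : z ≠ 0) :
    HasSum (fun i => a i * (e i * z ^ (e i - 1))) (deriv (fun w => ∑' i, a i * w ^ e i) z) := by
  obtain ⟨U, hU, hzU, hU0, u, hu, hle⟩ := exists_isOpen_summable_norm_mul_zpow_le ha hz
  convert! Complex.hasSum_deriv_of_summable_norm hu (fun i w hw => ?_) hU hle hzU using 2 with i
  · rw [deriv_const_mul_field, deriv_zpow]
  · exact ((differentiableAt_zpow.2 (Or.inl (hU0 w hw))).const_mul _).differentiableWithinAt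

lemma summable_mul_zpow
    (ha : ∀ r : ℝ, 0 < r → Summable fun i => ‖a i‖ * r ^ e i) {z : ℂ} (hz : z ≠ 0) :
    Summable fun i => a i * z ^ e i :=
  .of_norm <| (ha ‖z‖ (norm_pos_iff.2 hz)).congr fun i => by rw [norm_mul, norm_zpow]

end LaurentSeries

section QPochhammer

variable {q x : ℂ}

lemma qPoch_succ (x q : ℂ) (k : ℕ) : qPoch x q (k + 1) = qPoch x q k * (1 - x * q ^ k) :=
  prod_range_succ _ _

lemma one_sub_pow_ne_zero {k : ℕ} (hq : ‖q‖ < 1) (hk : k ≠ 0) : 1 - q ^ k ≠ 0 := by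
  refine sub_ne_zero.2 fun h => (pow_lt_one₀ (norm_nonneg q) hq hk).ne ?_
  rw [← norm_pow, ← h, norm_one]

lemma qPoch_self_ne_zero (hq : ‖q‖ < 1) (k : ℕ) : qPoch q q k ≠ 0 :=
  prod_ne_zero_iff.2 fun j _ => by
    rw [← pow_succ']
    exact one_sub_pow_ne_zero hq j.succ_ne_zero

lemma summable_norm_mul_pow (x : ℂ) (hq : ‖q‖ < 1) : Summable fun j : ℕ => ‖-(x * q ^ j)‖ := by
  simpa using (summable_geometric_of_lt_one (norm_nonneg q) hq).mul_left ‖x‖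

lemma multipliable_one_sub_mul_pow (x : ℂ) (hq : ‖q‖ < 1) :
    Multipliable fun j : ℕ => 1 - x * q ^ j := by
  simpa only [sub_eq_add_neg] using multipliable_one_add_of_summable (summable_norm_mul_pow x hq)

lemma tendsto_qPoch (x : ℂ) (hq : ‖q‖ < 1) :
    Tendsto (qPoch x q) atTop (𝓝 (qPochInf x q)) :=
  (multipliable_one_sub_mul_pow x hq).tendsto_prod_tprod_nat

lemma qPochInf_ne_zero (hq : ‖q‖ < 1) (hx : ∀ j : ℕ, 1 - x * q ^ j ≠ 0) : qPochInf x q ≠ 0 := by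
  simp only [qPochInf, sub_eq_add_neg] at hx ⊢
  exact tprod_one_add_ne_zero_of_summable hx (summable_norm_mul_pow x hq)

lemma qPochInf_self_ne_zero (hq : ‖q‖ < 1) : qPochInf q q ≠ 0 :=
  qPochInf_ne_zero hq fun j => by
    rw [← pow_succ']
    exact one_sub_pow_ne_zero hq j.succ_ne_zero

lemma qPochInf_eq_one_sub_mul (x : ℂ) (hq : ‖q‖ < 1) :
    qPochInf x q = (1 - x) * qPochInf (x * q) q := by
  have hshift : (fun j : ℕ => 1 - x * q ^ (j + 1)) = fun j => 1 - x * q * q ^ j := by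
    simp only [pow_succ', mul_assoc]
  rw [qPochInf, tprod_eq_zero_mul', hshift, pow_zero, mul_one, qPochInf]
  rw [hshift]
  exact multipliable_one_sub_mul_pow (x * q) hq

lemma differentiable_qPochInf (hq : ‖q‖ < 1) : Differentiable ℂ fun x => qPochInf x q := by
  intro x
  have hunif : HasProdLocallyUniformlyOn (fun (j : ℕ) y => 1 + -(y * q ^ j))
      (fun y => ∏' j : ℕ, (1 + -(y * q ^ j))) (Metric.ball 0 (‖x‖ + 1)) := by
    refine ((summable_geometric_of_lt_one (norm_nonneg q) hq).mul_left
      (‖x‖ + 1)).hasProdLocallyUniformlyOn_nat_one_add Metric.isOpen_ball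
      (.of_forall fun j y hy => ?_) fun j => by fun_prop
    rw [norm_neg, norm_mul, norm_pow]
    gcongr
    exact (mem_ball_zero_iff.1 hy).le
  simp only [qPochInf, sub_eq_add_neg]
  refine DifferentiableOn.differentiableAt (s := Metric.ball 0 (‖x‖ + 1)) ?_
    (Metric.isOpen_ball.mem_nhds (mem_ball_zero_iff.2 (lt_add_one _)))
  exact hunif.differentiableOn (.of_forall fun _ => by
    simpa [Finset.prod_fn] using DifferentiableOn.finsetProd fun _ _ => by fun_prop)
    Metric.isOpen_ball

/-- The reciprocal `1 / (q;q)_k`, extended to `k : ℤ` by `0` at negative `k`; with this convention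
`1 / (q;q)_{k-1} = (1 - q^k) / (q;q)_k` holds for every integer `k`. -/
noncomputable def invQPoch (q : ℂ) : ℤ → ℂ
  | .ofNat k => (qPoch q q k)⁻¹
  | .negSucc _ => 0

lemma invQPoch_natCast (q : ℂ) (k : ℕ) : invQPoch q k = (qPoch q q k)⁻¹ := rfl

lemma invQPoch_of_neg (q : ℂ) {k : ℤ} (hk : k < 0) : invQPoch q k = 0 := by
  obtain ⟨n, rfl⟩ := Int.eq_negSucc_of_lt_zero hk
  rfl

lemma invQPoch_sub_one (hq : ‖q‖ < 1) (k : ℤ) :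
    invQPoch q (k - 1) = (1 - q ^ k) * invQPoch q k := by
  rcases lt_trichotomy k 0 with hk | rfl | hk
  · rw [invQPoch_of_neg q hk, invQPoch_of_neg q (by lia), mul_zero]
  · rw [invQPoch_of_neg q (by lia), zpow_zero, sub_self, zero_mul]
  · obtain ⟨n, rfl⟩ := Int.eq_succ_of_zero_lt hk
    have hne := one_sub_pow_ne_zero hq n.succ_ne_zero
    rw [← Nat.cast_succ, invQPoch_natCast, zpow_natCast, qPoch_succ, ← pow_succ', Nat.cast_succ,
      add_sub_cancel_right, invQPoch_natCast, mul_inv, mul_left_comm, mul_inv_cancel₀ hne, mul_one]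

lemma tendsto_invQPoch (hq : ‖q‖ < 1) :
    Tendsto (invQPoch q) atTop (𝓝 (qPochInf q q)⁻¹) := by
  rw [← Nat.map_cast_int_atTop, tendsto_map'_iff]
  exact (tendsto_qPoch q hq).inv₀ (qPochInf_self_ne_zero hq)

lemma exists_norm_invQPoch_le (hq : ‖q‖ < 1) : ∃ C, ∀ k, ‖invQPoch q k‖ ≤ C := by
  obtain ⟨C, hC⟩ := (Metric.isBounded_range_of_tendsto _
    ((tendsto_qPoch q hq).inv₀ (qPochInf_self_ne_zero hq))).exists_norm_le
  refine ⟨C, fun k => ?_⟩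
  rcases k with k | _
  · exact hC _ ⟨k, rfl⟩
  · exact norm_zero.trans_le ((norm_nonneg _).trans (hC _ ⟨0, rfl⟩))

end QPochhammer

section ThetaTerm

variable {q s : ℂ}

/-- The `k`-th term `(-1)^k q^{k(k+1)/2} s^k` of the Jacobi theta series `θ(s;q)`. -/
noncomputable def thetaTerm (q s : ℂ) (k : ℤ) : ℂ :=
  (-1) ^ k * q ^ (k * (k + 1) / 2) * s ^ k

lemma mul_add_one_ediv_two_add (k n : ℤ) :
    (k + n) * (k + n + 1) / 2 = n * (n + 1) / 2 + (k * (k + 1) / 2 + n * k) := by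
  have htwo : ∀ m : ℤ, 2 * (m * (m + 1) / 2) = m * (m + 1) := fun m =>
    Int.mul_ediv_cancel' (Int.even_mul_succ_self m).two_dvd
  linarith [htwo (k + n), htwo k, htwo n]

lemma thetaTerm_add (hq : q ≠ 0) (hs : s ≠ 0) (k n : ℤ) :
    thetaTerm q s (k + n) = thetaTerm q s n * thetaTerm q (q ^ n * s) k := by
  simp only [thetaTerm]
  rw [mul_add_one_ediv_two_add, zpow_add₀ (by norm_num), zpow_add₀ hq, zpow_add₀ hq, zpow_add₀ hs,
    mul_zpow, ← zpow_mul]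
  ring

lemma thetaTerm_neg (hq : q ≠ 0) (k : ℤ) : thetaTerm q s (-k) = thetaTerm q (q * s)⁻¹ k := by
  have htriangle : -k * (-k + 1) / 2 = k * (k + 1) / 2 - k := by
    rw [← Int.sub_mul_ediv_right _ _ two_ne_zero]
    ring_nf
  rw [thetaTerm, thetaTerm, htriangle, zpow_sub₀ hq, mul_inv, mul_zpow, inv_zpow, inv_zpow,
    zpow_neg, zpow_neg, ← inv_zpow, inv_neg_one]
  ring

lemma thetaTerm_one (q s : ℂ) : thetaTerm q s 1 = -(q * s) := by
  simp [thetaTerm]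

lemma thetaTerm_succ (hq : q ≠ 0) (hs : s ≠ 0) (k : ℤ) :
    thetaTerm q s (k + 1) = -(s * q ^ (k + 1)) * thetaTerm q s k := by
  rw [add_comm, thetaTerm_add hq hs, thetaTerm_one, add_comm, zpow_add_one₀ hq]
  ring

lemma summable_norm_thetaTerm_natCast (hq0 : q ≠ 0) (hq : ‖q‖ < 1) (hs : s ≠ 0) :
    Summable fun k : ℕ => ‖thetaTerm q s k‖ := by
  have hratio : Tendsto (fun k : ℕ => ‖s * q ^ (k + 1)‖) atTop (𝓝 0) := by
    simpa using (((tendsto_pow_atTop_nhds_zero_of_norm_lt_one hq).comp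
      (tendsto_add_atTop_nat 1)).const_mul s).norm
  have hne : ∀ k : ℕ, thetaTerm q s k ≠ 0 := fun k =>
    mul_ne_zero (mul_ne_zero (zpow_ne_zero _ (by norm_num)) (zpow_ne_zero _ hq0))
      (zpow_ne_zero _ hs)
  refine (summable_of_ratio_test_tendsto_lt_one zero_lt_one (.of_forall hne)
    (hratio.congr fun k => ?_)).norm
  rw [Nat.cast_succ, thetaTerm_succ hq0 hs, norm_mul _ (thetaTerm q s k),
    mul_div_cancel_right₀ _ (norm_ne_zero_iff.2 (hne k)), norm_neg, ← Nat.cast_succ, zpow_natCast]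

lemma summable_norm_thetaTerm (hq0 : q ≠ 0) (hq : ‖q‖ < 1) (hs : s ≠ 0) :
    Summable fun k : ℤ => ‖thetaTerm q s k‖ := by
  refine .of_nat_of_neg (summable_norm_thetaTerm_natCast hq0 hq hs) ?_
  simp only [thetaTerm_neg hq0]
  exact summable_norm_thetaTerm_natCast hq0 hq (inv_ne_zero (mul_ne_zero hq0 hs))

end ThetaTerm

section TripleProduct

variable {q s : ℂ}

/-- The theta series truncated to `-n ≤ k ≤ m` by the weights `1 / ((q;q)_{m-k} (q;q)_{n+k})`: up to
the factor `(q;q)_{m+n}` it is the `q`-binomial sum in the finite form of the Jacobi triple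
product. -/
noncomputable def truncTheta (q s : ℂ) (m n : ℤ) : ℂ :=
  ∑' k : ℤ, thetaTerm q s k * (invQPoch q (m - k) * invQPoch q (n + k))

lemma summable_mul_invQPoch_mul_invQPoch (q : ℂ) (m n : ℤ) (c : ℤ → ℂ) :
    Summable fun k : ℤ => c k * (invQPoch q (m - k) * invQPoch q (n + k)) := by
  refine summable_of_ne_finset_zero (s := Finset.Icc (-n) m) fun k hk => ?_
  rcases lt_or_ge m k with hmk | hkm
  · rw [invQPoch_of_neg q (sub_neg.2 hmk), zero_mul, mul_zero]
  · have hkn : k < -n := lt_of_not_ge fun h => hk (Finset.mem_Icc.2 ⟨h, hkm⟩)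
    rw [invQPoch_of_neg q (by lia : n + k < 0), mul_zero, mul_zero]

lemma truncTheta_succ (hq0 : q ≠ 0) (hq : ‖q‖ < 1) (hs : s ≠ 0) (m n : ℤ) :
    (1 - q ^ (m + n + 1)) * truncTheta q s (m + 1) n
      = (1 - s * q ^ (m + 1)) * truncTheta q s m n := by
  set weight : ℤ → ℂ := fun k => invQPoch q (m - k) * invQPoch q (n + k)
  set shifted : ℤ → ℂ := fun k =>
    q ^ (m + 1 - k) * thetaTerm q s k * (invQPoch q (m + 1 - k) * invQPoch q (n - 1 + k))
  -- Split `1 - q ^ (m + n + 1) = (1 - q ^ (m + 1 - k)) + q ^ (m + 1 - k) * (1 - q ^ (n + k))`.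
  have hterm : ∀ k, (1 - q ^ (m + n + 1)) *
      (thetaTerm q s k * (invQPoch q (m + 1 - k) * invQPoch q (n + k)))
        = thetaTerm q s k * weight k + shifted k := fun k => by
    have hm := invQPoch_sub_one hq (m + 1 - k)
    have hn := invQPoch_sub_one hq (n + k)
    rw [show m + 1 - k - 1 = m - k by ring] at hm
    rw [show n + k - 1 = n - 1 + k by ring] at hn
    simp only [weight, shifted, hm, hn]
    rw [show m + n + 1 = (m + 1 - k) + (n + k) by ring, zpow_add₀ hq0]
    ring
  have hshift : ∀ k, shifted (k + 1) = -(s * q ^ (m + 1)) * (thetaTerm q s k * weight k) :=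
    fun k => by
    simp only [weight, shifted]
    rw [thetaTerm_succ hq0 hs, show n - 1 + (k + 1) = n + k by ring,
      show m + 1 - (k + 1) = m - k by ring, show m + 1 = (m - k) + (k + 1) by ring,
      zpow_add₀ hq0 (m - k)]
    ring
  rw [truncTheta, ← tsum_mul_left, tsum_congr hterm,
    (summable_mul_invQPoch_mul_invQPoch q m n _).tsum_add
      (summable_mul_invQPoch_mul_invQPoch q (m + 1) (n - 1) _),
    ← (Equiv.addRight 1).tsum_eq shifted, Equiv.coe_addRight, tsum_congr hshift, tsum_mul_left,
    truncTheta]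
  ring

lemma truncTheta_symm (hq : q ≠ 0) (m n : ℤ) :
    truncTheta q s m n = truncTheta q (q * s)⁻¹ n m := by
  rw [truncTheta, ← (Equiv.neg ℤ).tsum_eq]
  refine tsum_congr fun k => ?_
  rw [Equiv.neg_apply, thetaTerm_neg hq, sub_neg_eq_add, ← sub_eq_add_neg,
    mul_comm (invQPoch q (m + k))]

lemma truncTheta_zero_zero (q s : ℂ) : truncTheta q s 0 0 = 1 := by
  rw [truncTheta, tsum_eq_single 0 fun k hk => ?_]
  · simp [thetaTerm, invQPoch, qPoch]
  · rcases hk.lt_or_gt with hk | hk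
    · rw [invQPoch_of_neg q (by lia : 0 + k < 0), mul_zero, mul_zero]
    · rw [invQPoch_of_neg q (by lia : 0 - k < 0), zero_mul, mul_zero]

lemma qPoch_mul_truncTheta_eq_mul_truncTheta_zero (hq0 : q ≠ 0) (hq : ‖q‖ < 1) (hs : s ≠ 0)
    (m n : ℕ) :
    qPoch q q (m + n) * truncTheta q s m n
      = qPoch (s * q) q m * (qPoch q q n * truncTheta q s 0 n) := by
  induction m with
  | zero => simp [qPoch]
  | succ m ih =>
    have hrec := truncTheta_succ hq0 hq hs m n
    have hexp : q ^ ((m : ℤ) + n + 1) = q * q ^ (m + n) := by rw [← pow_succ']; norm_cast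
    have hexp' : s * q ^ ((m : ℤ) + 1) = s * q * q ^ m := by rw [mul_assoc, ← pow_succ']; norm_cast
    rw [hexp, hexp'] at hrec
    rw [Nat.cast_succ, add_right_comm, qPoch_succ, qPoch_succ, mul_assoc, hrec]
    linear_combination (1 - s * q * q ^ m) * ih

lemma finite_jacobi_triple_product (hq0 : q ≠ 0) (hq : ‖q‖ < 1) (hs : s ≠ 0) (m n : ℕ) :
    qPoch q q (m + n) * truncTheta q s m n = qPoch (s * q) q m * qPoch s⁻¹ q n := by
  have hbase := qPoch_mul_truncTheta_eq_mul_truncTheta_zero hq0 hq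
    (inv_ne_zero (mul_ne_zero hq0 hs)) n 0
  have hinv : (q * s)⁻¹ * q = s⁻¹ := by field_simp
  rw [Nat.cast_zero, truncTheta_zero_zero, hinv, add_zero] at hbase
  rw [qPoch_mul_truncTheta_eq_mul_truncTheta_zero hq0 hq hs, truncTheta_symm hq0, hbase]
  simp [qPoch]

theorem jacobi_triple_product (hq0 : q ≠ 0) (hq : ‖q‖ < 1) (hs : s ≠ 0) :
    jtheta s q = qPochInf q q * qPochInf (s * q) q * qPochInf s⁻¹ q := by
  obtain ⟨C, hC⟩ := exists_norm_invQPoch_le hq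
  have hC0 : 0 ≤ C := (norm_nonneg _).trans (hC 0)
  have htrunc : Tendsto (fun N : ℕ => truncTheta q s N N) atTop
      (𝓝 (∑' k, thetaTerm q s k * ((qPochInf q q)⁻¹ * (qPochInf q q)⁻¹))) := by
    refine tendsto_tsum_of_dominated_convergence
      ((summable_norm_thetaTerm hq0 hq hs).mul_right (C * C)) (fun k => ?_)
      (.of_forall fun N k => ?_)
    · exact (((tendsto_invQPoch hq).comp (tendsto_atTop_add_const_right _ (-k)
        tendsto_natCast_atTop_atTop)).mul ((tendsto_invQPoch hq).comp
        (tendsto_atTop_add_const_right _ k tendsto_natCast_atTop_atTop))).const_mul _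
    · rw [norm_mul, norm_mul]
      gcongr <;> apply hC
  have hleft := ((tendsto_qPoch q hq).comp (tendsto_id.atTop_add_atTop tendsto_id)).mul htrunc
  have hright := (tendsto_qPoch (s * q) hq).mul (tendsto_qPoch s⁻¹ hq)
  have hlim := tendsto_nhds_unique hleft
    (hright.congr fun N => (finite_jacobi_triple_product hq0 hq hs N N).symm)
  have hne := qPochInf_self_ne_zero hq
  rw [tsum_mul_right] at hlim
  calc jtheta s q
    _ = qPochInf q q * (qPochInf q q *
          (jtheta s q * ((qPochInf q q)⁻¹ * (qPochInf q q)⁻¹))) := by field_simp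
    _ = _ := by rw [mul_assoc, ← hlim]; rfl

end TripleProduct

section Theta

variable {q s : ℂ}

lemma summable_norm_thetaTerm_one_mul_zpow (hq0 : q ≠ 0) (hq : ‖q‖ < 1) (r : ℝ) (hr : 0 < r) :
    Summable fun k : ℤ => ‖thetaTerm q 1 k‖ * r ^ k := by
  have hr' : (r : ℂ) ≠ 0 := Complex.ofReal_ne_zero.2 hr.ne'
  refine (summable_norm_thetaTerm hq0 hq hr').congr fun k => ?_
  simp [thetaTerm, abs_of_pos hr]

lemma jtheta_eq_tsum (s q : ℂ) : jtheta s q = ∑' k : ℤ, thetaTerm q 1 k * s ^ k := by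
  simp only [jtheta, thetaTerm, one_zpow, mul_one]

lemma differentiableAt_jtheta (hq0 : q ≠ 0) (hq : ‖q‖ < 1) (hs : s ≠ 0) :
    DifferentiableAt ℂ (fun z => jtheta z q) s := by
  simp only [jtheta_eq_tsum]
  exact differentiableAt_tsum_mul_zpow (summable_norm_thetaTerm_one_mul_zpow hq0 hq) hs

lemma jthetaD_eq_mul_deriv (hq0 : q ≠ 0) (hq : ‖q‖ < 1) (hs : s ≠ 0) :
    jthetaD s q = s * deriv (fun z => jtheta z q) s := by
  have hsum := hasSum_deriv_tsum_mul_zpow (summable_norm_thetaTerm_one_mul_zpow hq0 hq) hs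
  simp only [jtheta_eq_tsum, jthetaD]
  rw [← hsum.tsum_eq, ← tsum_mul_left]
  refine tsum_congr fun k => ?_
  rw [zpow_sub_one₀ hs, thetaTerm, one_zpow]
  field_simp

lemma jtheta_eq_thetaTerm_mul (hq : q ≠ 0) (hs : s ≠ 0) (n : ℤ) :
    jtheta s q = thetaTerm q s n * jtheta (q ^ n * s) q := by
  change ∑' k, thetaTerm q s k = thetaTerm q s n * ∑' k, thetaTerm q (q ^ n * s) k
  rw [← (Equiv.addRight n).tsum_eq, ← tsum_mul_left]
  exact tsum_congr fun k => thetaTerm_add hq hs k n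

lemma jtheta_one (hq0 : q ≠ 0) (hq : ‖q‖ < 1) : jtheta 1 q = 0 := by
  rw [jacobi_triple_product hq0 hq one_ne_zero, inv_one, qPochInf_eq_one_sub_mul 1 hq, sub_self,
    zero_mul, mul_zero]

lemma hasDerivAt_jtheta_one (hq0 : q ≠ 0) (hq : ‖q‖ < 1) :
    HasDerivAt (fun z => jtheta z q) (qPochInf q q ^ 3) 1 := by
  have hcofactor : ContinuousAt
      (fun z => qPochInf q q * qPochInf (z * q) q * (qPochInf (z⁻¹ * q) q * z⁻¹)) 1 := by
    have hcont := (differentiable_qPochInf hq).continuous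
    have hinv : ContinuousAt (fun z : ℂ => z⁻¹) 1 := continuousAt_inv₀ one_ne_zero
    fun_prop
  rw [hasDerivAt_iff_tendsto_slope]
  have hlim := hcofactor.tendsto.mono_left (nhdsWithin_le_nhds (s := {1}ᶜ))
  convert! hlim.congr' ?_ using 2
  · simp only [inv_one, one_mul, mul_one]
    ring
  · filter_upwards [self_mem_nhdsWithin,
      mem_nhdsWithin_of_mem_nhds (isOpen_ne.mem_nhds one_ne_zero)] with z hz1 hz0
    have hz1' : z - 1 ≠ 0 := sub_ne_zero.2 hz1
    rw [slope_def_field, jtheta_one hq0 hq, jacobi_triple_product hq0 hq hz0,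
      qPochInf_eq_one_sub_mul z⁻¹ hq]
    field_simp
    ring

lemma jtheta_zpow (hq0 : q ≠ 0) (hq : ‖q‖ < 1) (n : ℤ) : jtheta (q ^ n) q = 0 := by
  rw [jtheta_eq_thetaTerm_mul hq0 (zpow_ne_zero n hq0) (-n), ← zpow_add₀ hq0, neg_add_cancel,
    zpow_zero, jtheta_one hq0 hq, mul_zero]

lemma deriv_jtheta_zpow_ne_zero (hq0 : q ≠ 0) (hq : ‖q‖ < 1) (n : ℤ) :
    deriv (fun z => jtheta z q) (q ^ n) ≠ 0 := by
  intro hderiv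
  have hqn := zpow_ne_zero n hq0
  have hfactor : HasDerivAt (fun z => thetaTerm q z n) (deriv (fun z => thetaTerm q z n) 1) 1 :=
    ((differentiableAt_zpow.2 (.inl one_ne_zero)).const_mul _).hasDerivAt
  have hscaled : HasDerivAt (fun z => jtheta (q ^ n * z) q) 0 1 := by
    have hzero : HasDerivAt (fun z => jtheta z q) 0 (q ^ n * 1) := by
      rw [mul_one, ← hderiv]
      exact (differentiableAt_jtheta hq0 hq hqn).hasDerivAt
    simpa [Function.comp_def] using hzero.comp (1 : ℂ) ((hasDerivAt_id (1 : ℂ)).const_mul (q ^ n))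
  have hprod : HasDerivAt (fun z => jtheta z q) 0 1 := by
    refine HasDerivAt.congr_of_eventuallyEq ?_ ((isOpen_ne.eventually_mem one_ne_zero).mono
      fun z hz => jtheta_eq_thetaTerm_mul hq0 hz n)
    simpa [jtheta_zpow hq0 hq] using hfactor.fun_mul hscaled
  exact pow_ne_zero 3 (qPochInf_self_ne_zero hq) ((hasDerivAt_jtheta_one hq0 hq).unique hprod)

lemma tendsto_sub_zpow_mul_jthetaD_div_jtheta (hq0 : q ≠ 0) (hq : ‖q‖ < 1) (n : ℤ) :
    Tendsto (fun t => (t - q ^ n) * (jthetaD t⁻¹ q / jtheta t⁻¹ q) / t) (𝓝[≠] (q ^ n))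
      (𝓝 (-1)) := by
  have hqn := zpow_ne_zero n hq0
  have hderiv : ∀ t : ℂ, t ≠ 0 → HasDerivAt (fun t => jtheta t⁻¹ q)
      (deriv (fun z => jtheta z q) t⁻¹ * -(t ^ 2)⁻¹) t := fun t ht =>
    (differentiableAt_jtheta hq0 hq (inv_ne_zero ht)).hasDerivAt.comp t (hasDerivAt_inv ht)
  have hanalytic : AnalyticAt ℂ (fun t => jtheta t⁻¹ q) (q ^ n) :=
    DifferentiableOn.analyticAt (s := {0}ᶜ)
      (fun t ht => (hderiv t ht).differentiableAt.differentiableWithinAt)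
      (isOpen_ne.mem_nhds hqn)
  have hzero : jtheta (q ^ n)⁻¹ q = 0 := by rw [← zpow_neg, jtheta_zpow hq0 hq]
  have hsimple : deriv (fun t => jtheta t⁻¹ q) (q ^ n) ≠ 0 := by
    rw [(hderiv _ hqn).deriv, ← zpow_neg]
    exact mul_ne_zero (deriv_jtheta_zpow_ne_zero hq0 hq _)
      (neg_ne_zero.2 (inv_ne_zero (pow_ne_zero 2 hqn)))
  refine (hanalytic.tendsto_mul_logDeriv_simple_zero hzero hsimple).neg.congr' ?_
  filter_upwards [mem_nhdsWithin_of_mem_nhds (isOpen_ne.mem_nhds hqn)] with t ht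
  rw [logDeriv_apply, (hderiv t ht).deriv, jthetaD_eq_mul_deriv hq0 hq (inv_ne_zero ht)]
  field_simp

end Theta

section Residue

variable {q t : ℂ}

/-- The coefficient `(-1)^k q^{k(k+1)/2} (q;q)_k^{-2}` of `t^{-1-k}` in `g^{(0,0)}(t,q)`. -/
noncomputable def g00Coeff (q : ℂ) (k : ℕ) : ℂ :=
  (-1) ^ k * q ^ (k * (k + 1) / 2) / qPoch q q k ^ 2

/-- The finite sum `∑_{j=1}^k (1 + q^j) / (1 - q^j)` in the coefficients of `g^{(0,1)}(t,q)`. -/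
noncomputable def qHarmonic (q : ℂ) (k : ℕ) : ℂ :=
  ∑ j ∈ Finset.range k, (1 + q ^ (j + 1)) / (1 - q ^ (j + 1))

/-- The part of `g^{(0,1)}(t,q)` that is holomorphic on `ℂ ∖ {0}`: the series of `g^{(0,0)}(t,q)`
with coefficients multiplied by `qHarmonic q k`. -/
noncomputable def g01Reg (t q : ℂ) : ℂ :=
  ∑' k : ℕ, qHarmonic q k * g00Coeff q k * t ^ (-1 - (k : ℤ))

lemma norm_g00Coeff_mul_zpow {r : ℝ} (hr : 0 < r) (k : ℕ) :
    ‖g00Coeff q k‖ * r ^ (-1 - (k : ℤ))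
      = ‖thetaTerm q (r : ℂ)⁻¹ k‖ * (r⁻¹ * (‖invQPoch q k‖ * ‖invQPoch q k‖)) := by
  have htriangle : (k : ℤ) * (k + 1) / 2 = (k * (k + 1) / 2 : ℕ) := by norm_cast
  rw [thetaTerm, g00Coeff, invQPoch_natCast, htriangle, zpow_sub₀ hr.ne']
  simp only [zpow_natCast, inv_pow, norm_mul, norm_div, norm_inv, norm_pow, norm_neg, norm_one,
    one_pow, one_mul, zpow_neg_one, Complex.norm_real, Real.norm_eq_abs, abs_of_pos hr]
  field_simp

lemma summable_norm_g00Coeff_mul_zpow (hq0 : q ≠ 0) (hq : ‖q‖ < 1) (r : ℝ) (hr : 0 < r) :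
    Summable fun k : ℕ => ‖g00Coeff q k‖ * r ^ (-1 - (k : ℤ)) := by
  obtain ⟨C, hC⟩ := exists_norm_invQPoch_le hq
  have hC0 : 0 ≤ C := (norm_nonneg _).trans (hC 0)
  have hr' : (r : ℂ)⁻¹ ≠ 0 := inv_ne_zero (Complex.ofReal_ne_zero.2 hr.ne')
  refine .of_nonneg_of_le (fun k => by positivity) (fun k => ?_)
    ((summable_norm_thetaTerm_natCast hq0 hq hr').mul_right (r⁻¹ * (C * C)))
  rw [norm_g00Coeff_mul_zpow hr]
  gcongr <;> apply hC

lemma exists_norm_qHarmonic_le_mul_two_pow (hq : ‖q‖ < 1) :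
    ∃ C, ∀ k, ‖qHarmonic q k‖ ≤ C * 2 ^ k := by
  have hterm : Tendsto (fun j : ℕ => (1 + q ^ (j + 1)) / (1 - q ^ (j + 1))) atTop (𝓝 1) := by
    have hpow := (tendsto_pow_atTop_nhds_zero_of_norm_lt_one hq).comp (tendsto_add_atTop_nat 1)
    simpa [Pi.div_def] using (hpow.const_add 1).div (hpow.const_sub 1) (by simp)
  obtain ⟨C, hC⟩ := (Metric.isBounded_range_of_tendsto _ hterm).exists_norm_le
  refine ⟨C, fun k => ?_⟩
  have hC0 : 0 ≤ C := (norm_nonneg _).trans (hC _ ⟨0, rfl⟩)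
  calc ‖qHarmonic q k‖
    _ ≤ ∑ _j ∈ Finset.range k, C := norm_sum_le_of_le _ fun j _ => hC _ ⟨j, rfl⟩
    _ = C * k := by simp [mul_comm]
    _ ≤ C * 2 ^ k := by
      gcongr
      exact_mod_cast k.lt_two_pow_self.le

lemma summable_norm_qHarmonic_mul_g00Coeff_mul_zpow (hq0 : q ≠ 0) (hq : ‖q‖ < 1) (r : ℝ)
    (hr : 0 < r) :
    Summable fun k : ℕ => ‖qHarmonic q k * g00Coeff q k‖ * r ^ (-1 - (k : ℤ)) := by
  obtain ⟨C, hC⟩ := exists_norm_qHarmonic_le_mul_two_pow hq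
  refine .of_nonneg_of_le (fun k => by positivity) (fun k => ?_)
    -- Halving `r` absorbs the factor `2 ^ k`.
    ((summable_norm_g00Coeff_mul_zpow hq0 hq (r / 2) (by positivity)).mul_left (C / 2))
  calc ‖qHarmonic q k * g00Coeff q k‖ * r ^ (-1 - (k : ℤ))
    _ ≤ C * 2 ^ k * ‖g00Coeff q k‖ * r ^ (-1 - (k : ℤ)) := by
      rw [norm_mul]
      gcongr
      exact hC k
    _ = C / 2 * (‖g00Coeff q k‖ * (r / 2) ^ (-1 - (k : ℤ))) := by
      rw [div_zpow, zpow_sub₀ two_ne_zero, zpow_natCast, zpow_neg_one]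
      field_simp

lemma continuousAt_g00 (hq0 : q ≠ 0) (hq : ‖q‖ < 1) (ht : t ≠ 0) :
    ContinuousAt (fun t => g00 t q) t :=
  (differentiableAt_tsum_mul_zpow (summable_norm_g00Coeff_mul_zpow hq0 hq) ht).continuousAt

lemma continuousAt_g01Reg (hq0 : q ≠ 0) (hq : ‖q‖ < 1) (ht : t ≠ 0) :
    ContinuousAt (fun t => g01Reg t q) t :=
  (differentiableAt_tsum_mul_zpow
    (summable_norm_qHarmonic_mul_g00Coeff_mul_zpow hq0 hq) ht).continuousAt

lemma g01_eq_mul_g00_add_g01Reg (hq0 : q ≠ 0) (hq : ‖q‖ < 1) (ht : t ≠ 0) :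
    g01 t q = (E1 q / 2 - 1 / 2 - jthetaD t⁻¹ q / jtheta t⁻¹ q) * g00 t q + g01Reg t q := by
  have hg00 := summable_mul_zpow (summable_norm_g00Coeff_mul_zpow hq0 hq) ht
  have hreg := summable_mul_zpow (summable_norm_qHarmonic_mul_g00Coeff_mul_zpow hq0 hq) ht
  change _ = _ * ∑' k, g00Coeff q k * t ^ (-1 - (k : ℤ)) + _
  rw [g01Reg, ← tsum_mul_left, ← (hg00.mul_left _).tsum_add hreg]
  exact tsum_congr fun k => by rw [mul_assoc (qHarmonic q k), ← add_mul]; rfl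

end Residue

/-- `g^{(0,1)}(t,q)` has a simple pole at `t = q^n` with residue (of
`g^{(0,1)}(t,q) dt/(2πit)`) equal to `g^{(0,0)}(q^n, q)`. -/
theorem g01_residue
    (q : ℂ) (hq0 : 0 < ‖q‖) (hq1 : ‖q‖ < 1) (n : ℤ) :
    Tendsto (fun t : ℂ => (t - q ^ n) * g01 t q / t)
      (nhdsWithin (q ^ n) {t : ℂ | t ≠ 0 ∧ ∀ m : ℤ, t ≠ q ^ m})
      (nhds (g00 (q ^ n) q)) := by
  have hq : q ≠ 0 := norm_pos_iff.1 hq0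
  have hqn : q ^ n ≠ 0 := zpow_ne_zero n hq
  have hfactor : Tendsto (fun t => (t - q ^ n) / t) (𝓝[≠] (q ^ n)) (𝓝 0) := by
    have hcont : ContinuousAt (fun t => (t - q ^ n) / t) (q ^ n) := by fun_prop (disch := exact hqn)
    simpa using hcont.tendsto.mono_left nhdsWithin_le_nhds
  have hpole := tendsto_sub_zpow_mul_jthetaD_div_jtheta hq hq1 n
  have hg00 := (continuousAt_g00 hq hq1 hqn).tendsto.mono_left (nhdsWithin_le_nhds (s := {q ^ n}ᶜ))
  have hreg := (continuousAt_g01Reg hq hq1 hqn).tendsto.mono_left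
    (nhdsWithin_le_nhds (s := {q ^ n}ᶜ))
  have hlim := (((hfactor.mul_const (E1 q / 2 - 1 / 2)).sub hpole).mul hg00).add (hfactor.mul hreg)
  rw [zero_mul, zero_mul, zero_sub, neg_neg, one_mul, add_zero] at hlim
  refine (hlim.mono_left (nhdsWithin_mono _ fun t ht => ht.2 n)).congr' ?_
  filter_upwards [self_mem_nhdsWithin] with t ht
  rw [g01_eq_mul_g00_add_g01Reg hq hq1 ht.1]
  ring
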